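/- ν(2,3) = p^3 + 1: the number of 2-dimensional K-subspaces U of the standard hermitian space K^3 satisfying U^⊥ ⊆ U equals p^3 + 1. -/

import Mathlib

/-!
The form `h` is nondegenerate and reflexive, so `U ↦ U^⊥` is an involution on the subspaces of `K^l`
which exchanges dimensions `r` and `l - r`; hence `ν(r, l)` counts the totally isotropic subspaces
of dimension `l - r`. For `r = l - 1` these are the isotropic points of projective space, that is,
the nonzero isotropic vectors up to the `q^2 - 1` nonzero scalars, where `K` has `q^2` elements.

As `Kˣ` is cyclic of order `(q - 1)(q + 1)`, the norm `x ↦ x^(q+1)` takes each nonzero value fixed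
by `x ↦ x^q` exactly `q + 1` times. Splitting off a coordinate, the numbers `A_n` of isotropic
vectors of `K^n` therefore satisfy `A_(n+1) = A_n + (q + 1) (q^(2n) - A_n)`.
Starting from `A_0 = 1` this gives `A_3 - 1 = (q^2 - 1) (q^3 + 1)`.
-/

/-- The orthogonal complement `U^⊥` of a subspace `U ⊆ K^l` with respect to the standard
hermitian form `h(x, y) = Σ_i x_i · y_i^p` (where `x ↦ x^p` is the Frobenius of the field
`K` with `p^2` elements over its prime field). -/
def hermitianPerp (p : ℕ) {K : Type*} [Field K] {l : ℕ}
    (U : Submodule K (Fin l → K)) : Submodule K (Fin l → K) where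
  carrier := {v | ∀ u ∈ U, ∑ i, v i * u i ^ p = 0}
  zero_mem' := by
    intro u hu
    simp
  add_mem' := by
    intro a b ha hb u hu
    have := ha u hu
    have := hb u hu
    simp only [Pi.add_apply, add_mul, Finset.sum_add_distrib]
    simp [ha u hu, hb u hu]
  smul_mem' := by
    intro c v hv u hu
    simp only [Pi.smul_apply, smul_eq_mul, mul_assoc, ← Finset.mul_sum]
    simp [hv u hu]

/-- `hermitianNu p K r l` is the number `ν(r, l)` of `r`-dimensional `K`-subspaces `U` of
the standard hermitian space `K^l` satisfying `U^⊥ ⊆ U`. -/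
noncomputable def hermitianNu (p : ℕ) (K : Type*) [Field K] (r l : ℕ) : ℕ :=
  Nat.card {U : Submodule K (Fin l → K) //
    Module.finrank K U = r ∧ hermitianPerp p U ≤ U}

section CyclicGroup

theorem range_powMonoidHom_eq_ker {G : Type*} [CommGroup G] [IsCyclic G] [Finite G] {m n : ℕ}
    (hG : Nat.card G = m * n) :
    (powMonoidHom n : G →* G).range = (powMonoidHom m : G →* G).ker := by
  have hn : 0 < n := Nat.pos_of_mul_pos_left (hG ▸ Nat.card_pos)
  apply Subgroup.eq_of_le_of_card_ge
  · rintro _ ⟨x, rfl⟩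
    rw [MonoidHom.mem_ker, powMonoidHom_apply, powMonoidHom_apply, ← pow_mul, mul_comm, ← hG,
      pow_card_eq_one']
  · rw [IsCyclic.card_powMonoidHom_ker, IsCyclic.card_powMonoidHom_range, hG,
      Nat.gcd_mul_right_left, Nat.gcd_mul_left_left, Nat.mul_div_cancel _ hn]

theorem card_pow_eq_of_pow_eq_one {G : Type*} [CommGroup G] [IsCyclic G] [Finite G] {m n : ℕ}
    (hG : Nat.card G = m * n) {a : G} (ha : a ^ m = 1) :
    Nat.card {x : G // x ^ n = a} = n := by
  obtain ⟨b, rfl⟩ : a ∈ (powMonoidHom n : G →* G).range := by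
    rw [range_powMonoidHom_eq_ker hG]
    exact ha
  calc Nat.card {x : G // x ^ n = b ^ n}
      = Nat.card (powMonoidHom n : G →* G).ker :=
        Nat.card_congr ((powMonoidHom n).fiberEquivKer b)
    _ = n := by rw [IsCyclic.card_powMonoidHom_ker, hG, Nat.gcd_mul_left_left]

end CyclicGroup

section LinearAlgebra

theorem finrank_eq_of_semilinearEquiv {K L V W : Type*} [Semiring K] [Semiring L]
    [AddCommMonoid V] [AddCommMonoid W] [Module K V] [Module L W] {σ : K →+* L} {τ : L →+* K}
    [RingHomInvPair σ τ] [RingHomInvPair τ σ] (e : V ≃ₛₗ[σ] W) :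
    Module.finrank K V = Module.finrank L W := by
  have hσ : Function.Bijective σ :=
    (RingEquiv.ofRingHom σ τ RingHomInvPair.comp_eq₂ RingHomInvPair.comp_eq).bijective
  simpa [Module.finrank] using congrArg Cardinal.toNat
    (lift_rank_eq_of_equiv_equiv σ e.toAddEquiv hσ fun r v => e.map_smulₛₗ r v)

open scoped LinearAlgebra.Projectivization in
theorem card_lines_mul_card_units {K V : Type*} [DivisionRing K] [AddCommGroup V] [Module K V]
    (P : Submodule K V → Prop) :
    Nat.card {W : Submodule K V // Module.finrank K W = 1 ∧ P W} * Nat.card Kˣ =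
      Nat.card {v : V // v ≠ 0 ∧ P (K ∙ v)} := by
  have lines : {W : Submodule K V // Module.finrank K W = 1 ∧ P W} ≃
      {x : ℙ K V // P x.submodule} :=
    (((Projectivization.equivSubmodule K V).subtypeEquiv
      (q := fun W => P W.1) fun x => Iff.rfl).trans
        (Equiv.subtypeSubtypeEquivSubtypeInter _ P)).symm
  have vectors : {v : V // v ≠ 0 ∧ P (K ∙ v)} ≃ {x : ℙ K V // P x.submodule} × Kˣ :=
    (Equiv.subtypeSubtypeEquivSubtypeInter _ fun v => P (K ∙ v)).symm.trans <|
      ((Projectivization.nonZeroEquivProjectivizationProdUnits K V).subtypeEquiv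
        (q := fun y => P y.1.submodule) fun v => Iff.rfl).trans
      (Equiv.prodSubtypeFstEquivSubtypeProd (p := fun x : ℙ K V => P x.submodule))
  rw [Nat.card_congr lines, Nat.card_congr vectors, Nat.card_prod]

end LinearAlgebra

section Conjugation

variable {q : ℕ} {K : Type*} [Field K] [Fintype K]

theorem pow_pow_of_card_eq_sq (hK : Fintype.card K = q ^ 2) (x : K) : (x ^ q) ^ q = x := by
  rw [← pow_mul, ← sq, ← hK, FiniteField.pow_card]

theorem ne_zero_of_card_eq_sq (hK : Fintype.card K = q ^ 2) : q ≠ 0 := by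
  rintro rfl
  exact Fintype.card_ne_zero hK

theorem add_pow_of_card_eq_sq (hK : Fintype.card K = q ^ 2) (x y : K) :
    (x + y) ^ q = x ^ q + y ^ q := by
  obtain ⟨p, _⟩ := CharP.exists K
  obtain ⟨n, hp, hn⟩ := FiniteField.card K p
  have : Fact p.Prime := ⟨hp⟩
  obtain ⟨k, -, rfl⟩ := (Nat.dvd_prime_pow hp).mp (hn ▸ hK ▸ dvd_pow_self q two_ne_zero)
  exact add_pow_char_pow x y p k

/-- The involution `x ↦ x ^ q` of a field with `q ^ 2` elements, the conjugation of the hermitian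
form. -/
def frobeniusConj (hK : Fintype.card K = q ^ 2) : K →+* K where
  toFun x := x ^ q
  map_one' := one_pow q
  map_mul' x y := mul_pow x y q
  map_zero' := zero_pow (ne_zero_of_card_eq_sq hK)
  map_add' := add_pow_of_card_eq_sq hK

theorem frobeniusConj_apply (hK : Fintype.card K = q ^ 2) (x : K) :
    frobeniusConj hK x = x ^ q := rfl

instance (hK : Fintype.card K = q ^ 2) : RingHomInvPair (frobeniusConj hK) (frobeniusConj hK) where
  comp_eq := RingHom.ext (pow_pow_of_card_eq_sq hK)
  comp_eq₂ := RingHom.ext (pow_pow_of_card_eq_sq hK)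

/-- Coordinatewise `x ↦ x ^ q`, as a semilinear automorphism of `K ^ ι`; it turns the
hermitian form into the dot product. -/
def piConj (hK : Fintype.card K = q ^ 2) (ι : Type*) :
    (ι → K) ≃ₛₗ[frobeniusConj hK] (ι → K) where
  toFun v i := frobeniusConj hK (v i)
  invFun v i := frobeniusConj hK (v i)
  map_add' v w := funext fun i => map_add (frobeniusConj hK) (v i) (w i)
  map_smul' a v := funext fun i => map_mul (frobeniusConj hK) a (v i)
  left_inv v := funext fun i => pow_pow_of_card_eq_sq hK (v i)
  right_inv v := funext fun i => pow_pow_of_card_eq_sq hK (v i)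

theorem card_units_of_card_eq_sq (hK : Fintype.card K = q ^ 2) :
    Nat.card Kˣ = (q - 1) * (q + 1) := by
  rw [Nat.card_units, Nat.card_eq_fintype_card, hK, mul_comm, ← Nat.sq_sub_sq, one_pow]

theorem card_pow_succ_eq (hK : Fintype.card K = q ^ 2) {a : K} (ha : a ≠ 0)
    (hfix : a ^ q = a) : Nat.card {x : K // x ^ (q + 1) = a} = q + 1 := by
  lift a to Kˣ using ha.isUnit
  have ha1 : a ^ (q - 1) = 1 := by
    rw [← mul_eq_right (b := a), pow_sub_one_mul (ne_zero_of_card_eq_sq hK)]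
    exact Units.ext hfix
  let toField (u : {u : Kˣ // u ^ (q + 1) = a}) : {x : K // x ^ (q + 1) = a} :=
    ⟨u.1, congrArg Units.val u.2⟩
  have bij : Function.Bijective toField := by
    refine ⟨fun u v h => Subtype.ext (Units.ext (congrArg Subtype.val h)), fun ⟨x, hx⟩ => ?_⟩
    have hx0 : x ≠ 0 := ne_zero_pow q.succ_ne_zero (hx ▸ ha)
    exact ⟨⟨Units.mk0 x hx0, Units.ext hx⟩, rfl⟩
  rw [← Nat.card_eq_of_bijective toField bij,
    card_pow_eq_of_pow_eq_one (card_units_of_card_eq_sq hK) ha1]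

theorem sum_mul_pow_pow (hK : Fintype.card K = q ^ 2) {ι : Type*} [Fintype ι] (v w : ι → K) :
    (∑ i, v i * w i ^ q) ^ q = ∑ i, w i * v i ^ q := by
  rw [← frobeniusConj_apply hK, map_sum]
  refine Finset.sum_congr rfl fun i _ => ?_
  rw [frobeniusConj_apply, mul_pow, pow_pow_of_card_eq_sq hK, mul_comm]

end Conjugation

section Perp

variable {q : ℕ} {K : Type*} [Field K] {l : ℕ}

theorem mem_hermitianPerp {U : Submodule K (Fin l → K)} {v : Fin l → K} :
    v ∈ hermitianPerp q U ↔ ∀ u ∈ U, ∑ i, v i * u i ^ q = 0 := Iff.rfl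

variable [Fintype K]

theorem hermitianPerp_eq_map_dualAnnihilator (hK : Fintype.card K = q ^ 2)
    (U : Submodule K (Fin l → K)) :
    hermitianPerp q U =
      (U.map (piConj hK (Fin l)).toLinearMap).dualAnnihilator.map
        (dotProductEquiv K (Fin l)).symm.toLinearMap := by
  ext v
  rw [Submodule.mem_map_equiv, LinearEquiv.symm_symm, Submodule.mem_dualAnnihilator]
  exact (Set.forall_mem_image (f := piConj hK (Fin l)) (s := (U : Set (Fin l → K)))
    (p := fun w => dotProductEquiv K (Fin l) v w = 0)).symm

theorem finrank_add_finrank_hermitianPerp (hK : Fintype.card K = q ^ 2)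
    (U : Submodule K (Fin l → K)) :
    Module.finrank K U + Module.finrank K (hermitianPerp q U) = l := by
  rw [hermitianPerp_eq_map_dualAnnihilator hK, LinearEquiv.finrank_map_eq,
    finrank_eq_of_semilinearEquiv ((piConj hK (Fin l)).submoduleMap U),
    Subspace.finrank_add_finrank_dualAnnihilator_eq, Module.finrank_fin_fun]

theorem le_hermitianPerp_hermitianPerp (hK : Fintype.card K = q ^ 2)
    (U : Submodule K (Fin l → K)) : U ≤ hermitianPerp q (hermitianPerp q U) :=
  fun u hu v hv => by rw [← sum_mul_pow_pow hK, hv u hu, zero_pow (ne_zero_of_card_eq_sq hK)]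

theorem hermitianPerp_involutive (hK : Fintype.card K = q ^ 2) :
    Function.Involutive (hermitianPerp q : Submodule K (Fin l → K) → _) := fun U =>
  (Submodule.eq_of_le_of_finrank_eq (le_hermitianPerp_hermitianPerp hK U) <| by
    have := finrank_add_finrank_hermitianPerp hK U
    have := finrank_add_finrank_hermitianPerp hK (hermitianPerp q U)
    lia).symm

theorem hermitianNu_eq_card_isotropic (hK : Fintype.card K = q ^ 2) (r k : ℕ) :
    hermitianNu q K r (r + k) = Nat.card {W : Submodule K (Fin (r + k) → K) //
      Module.finrank K W = k ∧ W ≤ hermitianPerp q W} := by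
  refine Nat.card_congr ((hermitianPerp_involutive hK).toPerm.subtypeEquiv fun U => ?_)
  have := finrank_add_finrank_hermitianPerp hK U
  rw [Function.Involutive.coe_toPerm, hermitianPerp_involutive hK U]
  exact and_congr_left' (by lia)

end Perp

section Isotropic

variable {q : ℕ} {K : Type*} [Field K]

/-- The hermitian square `h(v, v)`; the vector `v` is isotropic when it vanishes. -/
def hermitianSq (q : ℕ) {ι : Type*} [Fintype ι] (v : ι → K) : K := ∑ i, v i * v i ^ q

theorem span_singleton_le_hermitianPerp_iff {l : ℕ} (v : Fin l → K) :
    K ∙ v ≤ hermitianPerp q (K ∙ v) ↔ hermitianSq q v = 0 := by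
  rw [Submodule.span_singleton_le_iff_mem, mem_hermitianPerp]
  constructor
  · exact fun h => h v (Submodule.mem_span_singleton_self v)
  · intro h u hu
    obtain ⟨c, rfl⟩ := Submodule.mem_span_singleton.mp hu
    calc ∑ i, v i * (c • v) i ^ q = c ^ q * hermitianSq q v := by
          simp only [hermitianSq, Finset.mul_sum, Pi.smul_apply, smul_eq_mul, mul_pow,
            mul_left_comm]
      _ = 0 := by rw [h, mul_zero]

theorem hermitianSq_cons {n : ℕ} (x : K) (v : Fin n → K) :
    hermitianSq q (Fin.cons x v : Fin (n + 1) → K) = x ^ (q + 1) + hermitianSq q v := by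
  simp only [hermitianSq, Fin.sum_univ_succ, Fin.cons_zero, Fin.cons_succ, ← pow_succ']

variable [Fintype K]

theorem card_pow_succ_eq_neg_hermitianSq (hK : Fintype.card K = q ^ 2) {ι : Type*} [Fintype ι]
    [DecidableEq K] (v : ι → K) :
    Nat.card {x : K // x ^ (q + 1) = -hermitianSq q v} =
      if hermitianSq q v = 0 then 1 else q + 1 := by
  split_ifs with hv
  · simp [hv]
  · refine card_pow_succ_eq hK (neg_ne_zero.mpr hv) ?_
    rw [← frobeniusConj_apply hK, map_neg, frobeniusConj_apply, hermitianSq, sum_mul_pow_pow hK]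

/-- The number of isotropic vectors of `K ^ n`, the zero vector included. -/
noncomputable def isotropicCount (q : ℕ) (K : Type*) [Field K] (n : ℕ) : ℕ :=
  Nat.card {v : Fin n → K // hermitianSq q v = 0}

theorem isotropicCount_succ (hK : Fintype.card K = q ^ 2) (n : ℕ) :
    isotropicCount q K (n + 1) + q * isotropicCount q K n = (q + 1) * (q ^ 2) ^ n := by
  classical
  have splitCoord : {v : Fin (n + 1) → K // hermitianSq q v = 0} ≃
      Σ w : Fin n → K, {x : K // x ^ (q + 1) = -hermitianSq q w} :=
    (((Equiv.prodComm _ _).trans (Fin.consEquiv fun _ => K)).subtypeEquiv fun y => by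
      change _ ↔ hermitianSq q (Fin.cons y.2 y.1 : Fin (n + 1) → K) = 0
      rw [hermitianSq_cons, eq_neg_iff_add_eq_zero]).symm.trans
    (Equiv.subtypeProdEquivSigmaSubtype fun (w : Fin n → K) x => x ^ (q + 1) = -hermitianSq q w)
  have fiber (w : Fin n → K) : Nat.card {x : K // x ^ (q + 1) = -hermitianSq q w} +
      q * (if hermitianSq q w = 0 then 1 else 0) = q + 1 := by
    rw [card_pow_succ_eq_neg_hermitianSq hK]
    split_ifs <;> lia
  calc isotropicCount q K (n + 1) + q * isotropicCount q K n
      = ∑ w : Fin n → K, (Nat.card {x : K // x ^ (q + 1) = -hermitianSq q w} +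
          q * (if hermitianSq q w = 0 then 1 else 0)) := by
        rw [isotropicCount, Nat.card_congr splitCoord, Nat.card_sigma, Finset.sum_add_distrib,
          ← Finset.mul_sum, Finset.sum_boole, isotropicCount, Nat.card_eq_fintype_card,
          Fintype.card_subtype, Nat.cast_id]
    _ = (q + 1) * (q ^ 2) ^ n := by
        simp only [fiber, Finset.sum_const, Finset.card_univ, Fintype.card_fun, hK,
          Fintype.card_fin, smul_eq_mul, mul_comm]

theorem q_mul_isotropicCount (hK : Fintype.card K = q ^ 2) (n : ℕ) :
    (q * isotropicCount q K n : ℤ) = q ^ (2 * n) + (-1) ^ n * (q ^ (n + 1) - q ^ n) := by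
  induction n with
  | zero => simp [isotropicCount, hermitianSq]
  | succ n ih =>
    have recurrence : (isotropicCount q K (n + 1) + q * isotropicCount q K n : ℤ) =
        (q + 1) * (q ^ 2) ^ n := mod_cast isotropicCount_succ hK n
    linear_combination (q : ℤ) * recurrence - (q : ℤ) * ih

theorem card_isotropicLines_mul_add_one (hK : Fintype.card K = q ^ 2) (n : ℕ) :
    Nat.card {W : Submodule K (Fin n → K) // Module.finrank K W = 1 ∧ W ≤ hermitianPerp q W} *
      (q ^ 2 - 1) + 1 = isotropicCount q K n := by
  have card_nonzero : Nat.card {v : Fin n → K // v ≠ 0 ∧ hermitianSq q v = 0} + 1 =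
      isotropicCount q K n := by
    simp only [and_comm (a := _ ≠ (0 : Fin n → K))]
    exact Set.ncard_sdiff_singleton_add_one (s := {v | hermitianSq q v = 0})
      (by simp [hermitianSq]) (Set.toFinite _)
  rw [← card_nonzero, ← hK, ← Nat.card_eq_fintype_card, ← Nat.card_units,
    card_lines_mul_card_units]
  simp only [span_singleton_le_hermitianPerp_iff]

end Isotropic

theorem sq_sub_one_mul_hermitianNu {q : ℕ} {K : Type*} [Field K] [Fintype K]
    (hK : Fintype.card K = q ^ 2) (n : ℕ) :
    ((q : ℤ) ^ 2 - 1) * hermitianNu q K n (n + 1) =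
      (q ^ (n + 1) - (-1) ^ (n + 1)) * (q ^ n - (-1) ^ n) := by
  have hq : (q : ℤ) ≠ 0 := Nat.cast_ne_zero.mpr (ne_zero_of_card_eq_sq hK)
  have hq1 : 1 ≤ q ^ 2 := hK ▸ Fintype.card_pos
  have hsign : ((-1 : ℤ) ^ n) ^ 2 = 1 := by rw [← pow_mul, Even.neg_one_pow (by simp)]
  have hcount : hermitianNu q K n (n + 1) * (q ^ 2 - 1) + 1 = isotropicCount q K (n + 1) := by
    rw [hermitianNu_eq_card_isotropic hK, card_isotropicLines_mul_add_one hK]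
  zify [hq1] at hcount
  apply mul_left_cancel₀ hq
  linear_combination (q : ℤ) * hcount + q_mul_isotropicCount hK (n + 1) + (q : ℤ) * hsign

theorem hermitianNu_two_three_general {q : ℕ} {K : Type*} [Field K] [Fintype K]
    (hK : Fintype.card K = q ^ 2) : hermitianNu q K 2 3 = q ^ 3 + 1 := by
  have hq : 1 < q ^ 2 := hK ▸ Fintype.one_lt_card
  have hq' : ((q : ℤ) ^ 2 - 1) ≠ 0 := by
    zify at hq
    lia
  zify
  apply mul_left_cancel₀ hq'
  linear_combination sq_sub_one_mul_hermitianNu hK 2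

/-- Let `p > 2` be a prime and `K` a field with `p^2` elements.  The number of
`2`-dimensional subspaces `U` of the standard hermitian space `K^3` with `U^⊥ ⊆ U`
equals `p^3 + 1`. -/
theorem hermitianNu_two_three
    (p : ℕ) (hp : p.Prime) (hp2 : 2 < p)
    (K : Type*) [Field K] [Fintype K] (hK : Fintype.card K = p ^ 2) :
    hermitianNu p K 2 3 = p ^ 3 + 1 :=
  hermitianNu_two_three_general hK
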